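/- Let d ≥ 2 be an integer, let V be a (finite or infinite) set, and let c be a 2-coloring of the complete digraph on V. Then V can be covered by at most 2·∑_{i=1}^{d} d^i = 2d(d^d − 1)/(d − 1) monochromatic d-dominating subgraphs. -/

import Mathlib

/-- The two colors for 2-colorings of complete digraphs. -/
inductive Color where
  | red : Color
  | blue : Color

/-- `U`, together with the color `j`, is the vertex set of a monochromatic `d`-dominating
subgraph of the complete digraph on `V` 2-colored by `c`: every finite `S ⊆ U` with
`1 ≤ |S| ≤ d` has a common out-neighbor `w ∈ U` with all edges `(s,w)` of color `j`. -/
def IsMonoDom {V : Type*} (c : V → V → Color) (d : ℕ) (j : Color) (U : Set V) : Prop :=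
  ∀ S : Finset V, ↑S ⊆ U → S.Nonempty → S.card ≤ d →
    ∃ w ∈ U, ∀ s ∈ S, c s w = j

/-!
Let `X` be the set of vertices whose loop has color `j`. For `s ∈ X`, the vertex `s` dominates its
own in-neighborhood `{v | c v s = j}`, so such neighborhoods are free to use in a cover. If `X` is
not `d`-dominating in color `j`, there is `S ⊆ X` with `|S| ≤ d` such that every `x ∈ X` receives
an edge of the opposite color from some `s ∈ S`. Either `x` lies in the in-neighborhood of `s`, or
both edges between `x` and `s` have the opposite color. Recursing into the latter vertices, for each
of the at most `d` choices of `s`, builds a clique `K` of the opposite color that is joined to all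
the vertices still to be covered.

Once `|K| = d - 1`, two sets suffice. Some nonempty `C ⊆ S` gives each of its vertices an
out-neighbor in `C` of the opposite color, and `K` together with the vertices of `X` sending an edge
of the opposite color into `C` is `d`-dominating in that color: a set of at most `d` vertices either
misses a vertex of `K` or has at most one vertex outside `K`. The rest of `X` lies in the
in-neighborhood of any single vertex of `C`.
-/

lemma exists_subset_forall_exists_rel {α : Type*} {r : α → α → Prop} {S : Finset α}
    (hS : S.Nonempty) (hr : ∀ t ∈ S, ∃ s ∈ S, r s t) :
    ∃ C ⊆ S, C.Nonempty ∧ ∀ t ∈ C, ∃ u ∈ C, r t u := by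
  classical
  induction S using Finset.strongInduction with
  | H S ih =>
    by_cases hout : ∀ t ∈ S, ∃ u ∈ S, r t u
    · exact ⟨S, Finset.Subset.rfl, hS, hout⟩
    push Not at hout
    obtain ⟨t₀, ht₀, hsink⟩ := hout
    have hr' : ∀ t ∈ S, ∃ s ∈ S.erase t₀, r s t := fun t ht ↦ by
      obtain ⟨s, hs, hst⟩ := hr t ht
      exact ⟨s, Finset.mem_erase.2 ⟨fun h ↦ hsink t ht (h ▸ hst), hs⟩, hst⟩
    obtain ⟨s, hs, -⟩ := hr' t₀ ht₀
    obtain ⟨C, hC, hC'⟩ := ih (S.erase t₀) (Finset.erase_ssubset ht₀) ⟨s, hs⟩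
      fun t ht ↦ hr' t (Finset.mem_of_mem_erase ht)
    exact ⟨C, hC.trans (Finset.erase_subset _ _), hC'⟩

/-- The color other than `j`; it lets the argument treat the two colors symmetrically. -/
def Color.opposite : Color → Color
  | red => blue
  | blue => red

lemma Color.ne_iff_eq_opposite {i j : Color} : i ≠ j ↔ i = j.opposite := by
  cases i <;> cases j <;> simp [Color.opposite]

section

variable {V : Type*} {c : V → V → Color} {d : ℕ} {j : Color}

lemma isMonoDom_inNeighbors {s : V} (hs : c s s = j) : IsMonoDom c d j {v | c v s = j} :=
  fun _ hS _ _ ↦ ⟨s, hs, fun _ ht ↦ hS ht⟩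

lemma not_isMonoDom_iff {X : Set V} :
    ¬IsMonoDom c d j X ↔ ∃ S : Finset V, ↑S ⊆ X ∧ S.Nonempty ∧ S.card ≤ d ∧
      ∀ x ∈ X, ∃ s ∈ S, c s x = j.opposite := by
  simp [IsMonoDom, ← Color.ne_iff_eq_opposite]

/-- `K` is a clique of color `j` whose edges to and from `X` all have color `j`. The colors of loops
are unconstrained. -/
structure IsCliqueJoinedTo (c : V → V → Color) (j : Color) (K : Finset V) (X : Set V) : Prop where
  pairwise : (K : Set V).Pairwise fun k k' ↦ c k k' = j
  edge_to : ∀ k ∈ K, ∀ x ∈ X, c k x = j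
  edge_from : ∀ k ∈ K, ∀ x ∈ X, c x k = j

namespace IsCliqueJoinedTo

variable {K : Finset V} {X Y : Set V}

lemma mono (h : IsCliqueJoinedTo c j K X) (hYX : Y ⊆ X) : IsCliqueJoinedTo c j K Y where
  pairwise := h.pairwise
  edge_to k hk x hx := h.edge_to k hk x (hYX hx)
  edge_from k hk x hx := h.edge_from k hk x (hYX hx)

lemma insert [DecidableEq V] (h : IsCliqueJoinedTo c j K X) {s : V} (hs : s ∈ X) :
    IsCliqueJoinedTo c j (insert s K) {x ∈ X | c s x = j ∧ c x s = j} where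
  pairwise := by
    rw [Finset.coe_insert, Set.pairwise_insert]
    exact ⟨h.pairwise, fun k hk _ ↦ ⟨h.edge_from k hk s hs, h.edge_to k hk s hs⟩⟩
  edge_to := (Finset.forall_mem_insert _ _ _).2
    ⟨fun _ hx ↦ hx.2.1, fun k hk x hx ↦ h.edge_to k hk x hx.1⟩
  edge_from := (Finset.forall_mem_insert _ _ _).2
    ⟨fun _ hx ↦ hx.2.2, fun k hk x hx ↦ h.edge_from k hk x hx.1⟩

lemma notMem_of_loop (h : IsCliqueJoinedTo c j.opposite K X) {s : V} (hs : s ∈ X)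
    (hloop : c s s = j) : s ∉ K :=
  fun hsK ↦ Color.ne_iff_eq_opposite.2 (h.edge_to s hsK s hs) hloop

lemma isMonoDom_union (h : IsCliqueJoinedTo c j K Y) (hd : d ≤ K.card + 1) (hY : Y.Nonempty)
    (hout : ∀ x ∈ Y, ∃ y ∈ Y, c x y = j) : IsMonoDom c d j (↑K ∪ Y) := by
  classical
  intro T hT _ hTd
  by_cases hKT : K ⊆ T
  · suffices ∃ y ∈ Y, ∀ x ∈ T \ K, c x y = j by
      obtain ⟨y, hy, hTy⟩ := this
      refine ⟨y, Or.inr hy, fun s hs ↦ ?_⟩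
      by_cases hsK : s ∈ K
      · exact h.edge_to s hsK y hy
      · exact hTy s (Finset.mem_sdiff.2 ⟨hs, hsK⟩)
    have hcard : (T \ K).card ≤ 1 := by
      rw [Finset.card_sdiff_of_subset hKT]
      omega
    obtain hTK | ⟨x, hx⟩ := (T \ K).eq_empty_or_nonempty
    · exact hY.imp fun y hy ↦ ⟨hy, by simp [hTK]⟩
    · obtain ⟨hxT, hxK⟩ := Finset.mem_sdiff.1 hx
      obtain ⟨y, hy, hxy⟩ := hout x ((hT hxT).resolve_left hxK)
      exact ⟨y, hy, fun s hs ↦ Finset.card_le_one.1 hcard x hx s hs ▸ hxy⟩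
  · obtain ⟨k, hk, hkT⟩ := Finset.not_subset.1 hKT
    refine ⟨k, Or.inl hk, fun s hs ↦ ?_⟩
    rcases hT hs with hsK | hsY
    · exact h.pairwise hsK hk (ne_of_mem_of_not_mem hs hkT)
    · exact h.edge_from k hk s hsY

end IsCliqueJoinedTo

/-- `A` can be covered by at most `n` monochromatic `d`-dominating subgraphs. These are recorded as
pairs of a vertex set and a color, and their vertex sets may leave `A`. -/
def HasMonoDomCover (c : V → V → Color) (d n : ℕ) (A : Set V) : Prop :=
  ∃ F : Finset (Set V × Color), F.card ≤ n ∧ A ⊆ ⋃ p ∈ F, p.1 ∧ ∀ p ∈ F, IsMonoDom c d p.2 p.1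

lemma IsMonoDom.hasMonoDomCover {A : Set V} (h : IsMonoDom c d j A) : HasMonoDomCover c d 1 A :=
  ⟨{(A, j)}, by simp, by simp, by simpa using h⟩

namespace HasMonoDomCover

variable {m n : ℕ} {A B : Set V}

lemma mono (h : HasMonoDomCover c d n A) (hnm : n ≤ m) (hBA : B ⊆ A) : HasMonoDomCover c d m B :=
  let ⟨F, hcard, hcov, hdom⟩ := h
  ⟨F, hcard.trans hnm, hBA.trans hcov, hdom⟩

lemma union (hA : HasMonoDomCover c d m A) (hB : HasMonoDomCover c d n B) :
    HasMonoDomCover c d (m + n) (A ∪ B) := by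
  classical
  obtain ⟨F, hFcard, hFcov, hFdom⟩ := hA
  obtain ⟨G, hGcard, hGcov, hGdom⟩ := hB
  refine ⟨F ∪ G, (Finset.card_union_le F G).trans (Nat.add_le_add hFcard hGcard), ?_, ?_⟩
  · rw [Finset.set_biUnion_union]
    exact Set.union_subset_union hFcov hGcov
  · exact Finset.forall_mem_union.2 ⟨hFdom, hGdom⟩

lemma biUnion {ι : Type*} {S : Finset ι} {A : ι → Set V}
    (h : ∀ s ∈ S, HasMonoDomCover c d n (A s)) :
    HasMonoDomCover c d (S.card * n) (⋃ s ∈ S, A s) := by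
  classical
  choose! F hcard hcov hdom using h
  refine ⟨S.biUnion F, Finset.card_biUnion_le_card_mul S F n hcard, ?_, ?_⟩
  · rw [Finset.set_biUnion_biUnion]
    exact Set.iUnion₂_mono hcov
  · intro p hp
    obtain ⟨s, hs, hps⟩ := Finset.mem_biUnion.1 hp
    exact hdom s hs p hps

lemma exists_fin (h : HasMonoDomCover c d n Set.univ) :
    ∃ t ≤ n, ∃ (U : Fin t → Set V) (j : Fin t → Color),
      (⋃ i, U i) = Set.univ ∧ ∀ i, IsMonoDom c d (j i) (U i) := by
  obtain ⟨F, hcard, hcov, hdom⟩ := h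
  let e := F.equivFin.symm
  have hunion : ⋃ p : F, p.1.1 = Set.univ := by
    simpa only [Set.iUnion_subtype, Set.univ_subset_iff] using hcov
  exact ⟨F.card, hcard, fun i ↦ (e i).1.1, fun i ↦ (e i).1.2,
    (e.surjective.iUnion_comp fun p ↦ p.1.1).trans hunion, fun i ↦ hdom _ (e i).2⟩

end HasMonoDomCover

variable {n : ℕ} {K : Finset V} {X : Set V}

lemma hasMonoDomCover_two_of_clique (hloop : ∀ x ∈ X, c x x = j)
    (hKX : IsCliqueJoinedTo c j.opposite K X) (hd : d ≤ K.card + 1) : HasMonoDomCover c d 2 X := by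
  by_cases hX : IsMonoDom c d j X
  · exact hX.hasMonoDomCover.mono one_le_two Set.Subset.rfl
  obtain ⟨S, hSX, hS, -, hSin⟩ := not_isMonoDom_iff.1 hX
  obtain ⟨C, hCS, ⟨t₀, ht₀⟩, hC⟩ :=
    exists_subset_forall_exists_rel hS fun t ht ↦ hSin t (hSX ht)
  have hCX : ∀ t ∈ C, t ∈ X := fun t ht ↦ hSX (hCS ht)
  let Y : Set V := {x ∈ X | ∃ t ∈ C, c x t = j.opposite}
  have hCY : ∀ t ∈ C, t ∈ Y := fun t ht ↦ ⟨hCX t ht, hC t ht⟩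
  have hKY : IsMonoDom c d j.opposite (↑K ∪ Y) :=
    (hKX.mono (Set.sep_subset _ _)).isMonoDom_union hd ⟨t₀, hCY t₀ ht₀⟩
      fun _ ⟨_, t, ht, hxt⟩ ↦ ⟨t, hCY t ht, hxt⟩
  have ht₀dom : IsMonoDom c d j {v | c v t₀ = j} := isMonoDom_inNeighbors (hloop t₀ (hCX t₀ ht₀))
  refine (ht₀dom.hasMonoDomCover.union hKY.hasMonoDomCover).mono le_rfl fun x hx ↦ ?_
  by_cases hxt₀ : c x t₀ = j
  · exact Or.inl hxt₀
  · exact Or.inr (Or.inr ⟨hx, t₀, ht₀, Color.ne_iff_eq_opposite.1 hxt₀⟩)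

lemma hasMonoDomCover_of_forall_opposite (hd : 0 < d) (hloop : ∀ x ∈ X, c x x = j)
    (h : ∀ s ∈ X, HasMonoDomCover c d n {x ∈ X | c s x = j.opposite ∧ c x s = j.opposite}) :
    HasMonoDomCover c d (d * (1 + n)) X := by
  by_cases hX : IsMonoDom c d j X
  · exact hX.hasMonoDomCover.mono (Nat.mul_pos hd (Nat.add_pos_left one_pos n)) Set.Subset.rfl
  obtain ⟨S, hSX, -, hSd, hSin⟩ := not_isMonoDom_iff.1 hX
  have hcover := HasMonoDomCover.biUnion fun s (hs : s ∈ S) ↦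
    (isMonoDom_inNeighbors (d := d) (hloop s (hSX hs))).hasMonoDomCover.union (h s (hSX hs))
  refine hcover.mono (Nat.mul_le_mul_right _ hSd) fun x hx ↦ ?_
  obtain ⟨s, hs, hsx⟩ := hSin x hx
  refine Set.mem_biUnion hs ?_
  by_cases hxs : c x s = j
  · exact Or.inl hxs
  · exact Or.inr ⟨hx, hsx, Color.ne_iff_eq_opposite.1 hxs⟩

lemma hasMonoDomCover_of_clique (hd : 0 < d) (m : ℕ) (hloop : ∀ x ∈ X, c x x = j)
    (hKX : IsCliqueJoinedTo c j.opposite K X) (hKd : d ≤ K.card + m + 1) :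
    HasMonoDomCover c d (∑ i ∈ Finset.Ico 1 (m + 1), d ^ i + 2 * d ^ m) X := by
  classical
  induction m generalizing K X with
  | zero => simpa using hasMonoDomCover_two_of_clique hloop hKX hKd
  | succ m ih =>
    have hbound : ∑ i ∈ Finset.Ico 1 (m + 2), d ^ i + 2 * d ^ (m + 1) =
        d * (1 + (∑ i ∈ Finset.Ico 1 (m + 1), d ^ i + 2 * d ^ m)) := by
      rw [Finset.sum_eq_sum_Ico_succ_bot (by omega), ← Finset.sum_Ico_add' _ 1 (m + 1) 1]
      simp only [pow_succ, ← Finset.sum_mul]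
      ring
    rw [hbound]
    refine hasMonoDomCover_of_forall_opposite hd hloop fun s hs ↦
      ih (fun x hx ↦ hloop x hx.1) (hKX.insert hs) ?_
    rw [Finset.card_insert_of_notMem (hKX.notMem_of_loop hs (hloop s hs))]
    omega

lemma hasMonoDomCover_loops (hd : 0 < d) (j : Color) :
    HasMonoDomCover c d (∑ i ∈ Finset.Ico 1 d, d ^ i + 2 * d ^ (d - 1)) {v | c v v = j} := by
  have hempty : IsCliqueJoinedTo c j.opposite ∅ {v | c v v = j} := ⟨by simp, by simp, by simp⟩
  have hcover := hasMonoDomCover_of_clique hd (d - 1) (fun _ hx ↦ hx) hempty (by omega)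
  rwa [Nat.sub_add_cancel hd] at hcover

end

theorem cover_by_mono_d_dominating_general {V : Type*} (d : ℕ) (hd : 0 < d)
    (c : V → V → Color) :
    ∃ t : ℕ, t ≤ 2 * (∑ i ∈ Finset.Ico 1 d, d ^ i + 2 * d ^ (d - 1)) ∧
      ∃ (U : Fin t → Set V) (j : Fin t → Color),
        (⋃ i, U i) = Set.univ ∧ ∀ i, IsMonoDom c d (j i) (U i) := by
  have hloops : {v | c v v = Color.red} ∪ {v | c v v = Color.blue} = Set.univ := by
    ext v
    cases h : c v v <;> simp [h]
  rw [two_mul]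
  exact (hloops ▸ (hasMonoDomCover_loops hd .red).union (hasMonoDomCover_loops hd .blue)).exists_fin

lemma sum_Ico_add_two_mul_pow_le_sum_Icc {d : ℕ} (hd : 2 ≤ d) :
    ∑ i ∈ Finset.Ico 1 d, d ^ i + 2 * d ^ (d - 1) ≤ ∑ i ∈ Finset.Icc 1 d, d ^ i := by
  calc ∑ i ∈ Finset.Ico 1 d, d ^ i + 2 * d ^ (d - 1)
      ≤ ∑ i ∈ Finset.Ico 1 d, d ^ i + d * d ^ (d - 1) := by gcongr
    _ = ∑ i ∈ Finset.Ico 1 d, d ^ i + d ^ d := by rw [mul_pow_sub_one (by omega)]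
    _ = ∑ i ∈ Finset.Icc 1 d, d ^ i := by
      rw [← Finset.sum_Ico_succ_top (by omega), ← Finset.Ico_succ_right_eq_Icc, Nat.succ_eq_succ]

/-- Theorem: every 2-colored complete digraph on a (finite or infinite) vertex set `V`
can be covered by at most `2 * ∑_{i=1}^d d^i` monochromatic `d`-dominating subgraphs. -/
theorem cover_by_mono_d_dominating {V : Type*} (d : ℕ) (hd : 2 ≤ d)
    (c : V → V → Color) :
    ∃ t : ℕ, t ≤ 2 * ∑ i ∈ Finset.Icc 1 d, d ^ i ∧
      ∃ (U : Fin t → Set V) (j : Fin t → Color),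
        (⋃ i, U i) = Set.univ ∧ ∀ i, IsMonoDom c d (j i) (U i) := by
  obtain ⟨t, ht, hcover⟩ := cover_by_mono_d_dominating_general d (by omega) c
  exact ⟨t, ht.trans (Nat.mul_le_mul_left 2 (sum_Ico_add_two_mul_pow_le_sum_Icc hd)), hcover⟩
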